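/- The scheme X_BH = {q₁ = q₂ = q₃ = 0} ⊂ ℙ⁵(ℂ) is a smooth complete intersection of three quadrics: for every nonzero point p ∈ ℂ⁶ with q₁(p) = q₂(p) = q₃(p) = 0, the 3×6 Jacobian matrix (∂qₖ/∂xⱼ(p))₁≤k≤3, 1≤j≤6 has rank 3. (Hence X_BH is a K3 surface.) -/

import Mathlib

open Matrix MvPolynomial

/-- The golden ratio `φ = (1+√5)/2`, viewed in `ℂ`. -/
noncomputable def phi : ℂ := (1 + Real.sqrt 5) / 2

/-- The three quadrics `q₁, q₂, q₃` in `ℂ[x₁,…,x₆]` cutting out the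
Brandhorst–Hashimoto K3 surface `X_BH ⊂ ℙ⁵(ℂ)`. -/
noncomputable def q : Fin 3 → MvPolynomial (Fin 6) ℂ :=
  ![X 0 ^ 2 + X 3 ^ 2 - C phi * X 4 ^ 2 + C phi * X 5 ^ 2,
    X 1 ^ 2 - C phi * X 3 ^ 2 + X 4 ^ 2 - C phi * X 5 ^ 2,
    X 2 ^ 2 + C phi * X 3 ^ 2 - C phi * X 4 ^ 2 + X 5 ^ 2]

/-!
The `qₖ` are diagonal, `qₖ = ∑ⱼ Aₖⱼ xⱼ²`, so their Jacobian matrix at `p` is `A * diagonal (2p)`,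
and `p` is a common zero if and only if `A` kills the vector of squares `p²`. All maximal minors
of `A` are `±1` or `±φ`, since `φ² = φ + 1`. Hence a nonzero vector in the kernel of `A` has more
than three nonzero coordinates, so that three of the columns of `A * diagonal (2p)` are columns of
`A` scaled by nonzero factors, and these have nonzero determinant.
-/

section MaximalMinors

variable {R n : Type*} [CommRing R] [LinearOrder n] {r : ℕ} {A : Matrix (Fin r) n R}

/-- Every square submatrix of full height `r` has nonzero determinant: over a field, any `r` columns
of `A` are linearly independent. Columns are selected in increasing order, which only affects the
sign of the minors. There is no condition if `A` has fewer than `r` columns. -/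
def HasNonzeroMaximalMinors (A : Matrix (Fin r) n R) : Prop :=
  ∀ f : Fin r ↪o n, (A.submatrix id f).det ≠ 0

variable [IsDomain R] [Fintype n] [DecidableEq R]

theorem HasNonzeroMaximalMinors.lt_card_support_of_mulVec_eq_zero (hA : HasNonzeroMaximalMinors A)
    (hr : r ≤ Fintype.card n) {v : n → R} (hv : v ≠ 0) (hAv : A *ᵥ v = 0) :
    r < Finset.card {j | v j ≠ 0} := by
  by_contra! hcard
  obtain ⟨t, hsupp, ht⟩ := Finset.exists_superset_card_eq hcard hr
  have hout : ∀ j ∉ t, v j = 0 := fun j hj => by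
    by_contra hvj
    exact hj (hsupp (by simpa using hvj))
  let f := t.orderEmbOfFin ht
  have hAf : A.submatrix id f *ᵥ (v ∘ f) = 0 := by
    ext i
    calc ∑ k, A i (f k) * v (f k)
      _ = ∑ j ∈ t, A i j * v j := by
        rw [← Finset.map_orderEmbOfFin_univ t ht, Finset.sum_map]
        rfl
      _ = ∑ j, A i j * v j :=
        Finset.sum_subset t.subset_univ fun j _ hj => by rw [hout j hj, mul_zero]
      _ = 0 := congrFun hAv i
  have hvf : v ∘ f = 0 := eq_zero_of_mulVec_eq_zero (hA f) hAf
  refine hv (funext fun j => ?_)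
  by_cases hj : j ∈ t
  · obtain ⟨k, rfl⟩ : j ∈ Set.range f := by rwa [Finset.range_orderEmbOfFin]
    exact congrFun hvf k
  · exact hout j hj

theorem HasNonzeroMaximalMinors.rank_mul_diagonal (hA : HasNonzeroMaximalMinors A) {w : n → R}
    (hw : r ≤ Finset.card {j | w j ≠ 0}) : (A * diagonal w).rank = r := by
  refine le_antisymm (by simpa using rank_le_card_height (A * diagonal w)) ?_
  obtain ⟨t, hsupp, ht⟩ := Finset.exists_subset_card_eq hw
  let f := t.orderEmbOfFin ht
  have hwf : ∀ k, w (f k) ≠ 0 := fun k => by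
    simpa using hsupp (t.orderEmbOfFin_mem ht k)
  have hsub : (A * diagonal w).submatrix id f = A.submatrix id f * diagonal (w ∘ f) := by
    ext i k
    simp
  have hdet : ((A * diagonal w).submatrix id f).det ≠ 0 := by
    rw [hsub, det_mul, det_diagonal]
    exact mul_ne_zero (hA f) (Finset.prod_ne_zero_iff.2 fun k _ => hwf k)
  calc r = ((A * diagonal w).submatrix id f).rank := by
        rw [rank_of_det_ne_zero hdet, Fintype.card_fin]
    _ ≤ (A * diagonal w).rank := rank_submatrix_le _ _ _

end MaximalMinors

section DiagonalForm

variable {R m n : Type*} [CommSemiring R] [Fintype n]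

/-- The diagonal form `∑ⱼ aⱼ xⱼᵈ` of degree `d` with coefficient vector `a`. -/
noncomputable def diagonalForm (d : ℕ) (a : n → R) : MvPolynomial n R :=
  ∑ j, C (a j) * X j ^ d

theorem eval_diagonalForm (d : ℕ) (A : Matrix m n R) (p : n → R) (k : m) :
    eval p (diagonalForm d (A k)) = (A *ᵥ (p ^ d)) k := by
  simp [diagonalForm, mulVec, dotProduct]

theorem pderiv_diagonalForm (d : ℕ) (a : n → R) (j : n) :
    pderiv j (diagonalForm d a) = C (a j * d) * X j ^ (d - 1) := by
  classical
  simp [diagonalForm, pderiv_X, Pi.single_apply, mul_assoc]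

theorem jacobian_diagonalForm [DecidableEq n] (d : ℕ) (A : Matrix m n R) (p : n → R) :
    (of fun k j => eval p (pderiv j (diagonalForm d (A k)))) =
      A * diagonal fun j => d * p j ^ (d - 1) := by
  ext k j
  simp [pderiv_diagonalForm, mul_assoc]

end DiagonalForm

theorem HasNonzeroMaximalMinors.rank_jacobian_diagonalForm {R n : Type*} [CommRing R] [IsDomain R]
    [LinearOrder n] [Fintype n] {r d : ℕ} {A : Matrix (Fin r) n R}
    (hA : HasNonzeroMaximalMinors A) (hr : r ≤ Fintype.card n)
    (hd : (d : R) ≠ 0) {p : n → R} (hp : p ≠ 0) (hzero : ∀ k, eval p (diagonalForm d (A k)) = 0) :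
    (of fun k j => eval p (pderiv j (diagonalForm d (A k)))).rank = r := by
  classical
  have hd₀ : d ≠ 0 := by
    rintro rfl
    exact hd Nat.cast_zero
  have hker : A *ᵥ (p ^ d) = 0 := by
    ext k
    rw [← eval_diagonalForm, hzero, Pi.zero_apply]
  have hsupp := hA.lt_card_support_of_mulVec_eq_zero hr (pow_ne_zero d hp) hker
  rw [jacobian_diagonalForm]
  refine hA.rank_mul_diagonal (hsupp.le.trans (Finset.card_le_card fun j hj => ?_))
  have hpj : p j ≠ 0 := by simpa [hd₀] using hj
  simpa using mul_ne_zero hd (pow_ne_zero (d - 1) hpj)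

section GoldenMatrix

variable {R : Type*} [CommRing R]

/-- The coefficient matrix of the quadrics cutting out `X_BH`, with an arbitrary element `f` in
place of `φ`. -/
def goldenMatrix (f : R) : Matrix (Fin 3) (Fin 6) R :=
  !![1, 0, 0,  1, -f,  f;
     0, 1, 0, -f,  1, -f;
     0, 0, 1,  f, -f,  1]

theorem det_goldenMatrix_submatrix_mem {f : R} (hf : f ^ 2 = f + 1) {c : Fin 3 → Fin 6}
    (hc : StrictMono c) :
    ((goldenMatrix f).submatrix id c).det ∈ ({1, -1, f, -f} : Set R) := by
  have h₀₁ : c 0 < c 1 := hc (by decide)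
  have h₁₂ : c 1 < c 2 := hc (by decide)
  simp only [det_fin_three, submatrix_apply, id]
  generalize c 0 = i at *
  generalize c 1 = j at *
  generalize c 2 = k at *
  simp only [Set.mem_insert_iff, Set.mem_singleton_iff]
  fin_cases i <;> fin_cases j <;> try (exact absurd h₀₁ (by decide))
  all_goals fin_cases k <;> try (exact absurd h₁₂ (by decide))
  all_goals simp [goldenMatrix] <;> grind

theorem hasNonzeroMaximalMinors_goldenMatrix [IsDomain R] {f : R} (hf : f ^ 2 = f + 1) :
    HasNonzeroMaximalMinors (goldenMatrix f) := by
  have hf₀ : f ≠ 0 := by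
    rintro rfl
    simp at hf
  intro c hdet
  simpa [hdet, hf₀, eq_comm] using det_goldenMatrix_submatrix_mem hf c.strictMono

end GoldenMatrix

theorem phi_sq : phi ^ 2 = phi + 1 := by
  have hphi : phi = (Real.goldenRatio : ℂ) := by simp [phi, Real.goldenRatio]
  rw [hphi]
  exact_mod_cast Real.goldenRatio_sq

theorem q_eq_diagonalForm : q = fun k => diagonalForm 2 (goldenMatrix phi k) := by
  funext k
  fin_cases k <;> simp [q, diagonalForm, goldenMatrix, Fin.sum_univ_six] <;> ring

theorem stmt_19_general {R : Type*} [CommRing R] [IsDomain R] (h2 : (2 : R) ≠ 0) {f : R}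
    (hf : f ^ 2 = f + 1) {p : Fin 6 → R} (hp : p ≠ 0)
    (hzero : ∀ k, eval p (diagonalForm 2 (goldenMatrix f k)) = 0) :
    (of fun k j => eval p (pderiv j (diagonalForm 2 (goldenMatrix f k)))).rank = 3 :=
  (hasNonzeroMaximalMinors_goldenMatrix hf).rank_jacobian_diagonalForm (by simp)
    (by exact_mod_cast h2) hp hzero

/-- `X_BH = {q₁ = q₂ = q₃ = 0} ⊂ ℙ⁵(ℂ)` is a smooth complete intersection of three
quadrics: at every nonzero `p ∈ ℂ⁶` on which all the `qₖ` vanish, the `3×6` Jacobian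
matrix `(∂qₖ/∂xⱼ(p))` has rank `3`. -/
theorem stmt_19 :
    ∀ p : Fin 6 → ℂ, p ≠ 0 → (∀ k : Fin 3, eval p (q k) = 0) →
      (Matrix.of fun (k : Fin 3) (j : Fin 6) => eval p (pderiv j (q k))).rank = 3 := by
  rw [q_eq_diagonalForm]
  exact fun p hp hzero => stmt_19_general two_ne_zero phi_sq hp hzero
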